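/- (One-color theorem for unions of unbounded linear sets.) Let G be an abelian group and let A ⊆ G be a union of k unbounded linear sets. Then for every r ∈ ℕ, the set A is an asymptotic (r, C((r+1)(k−1), k−1))-approximate group; moreover the covering condition holds for every h ≥ r(k−1)² + k: there exists X_h ⊆ G with |X_h| ≤ C((r+1)(k−1), k−1) and r(hA) ⊆ X_h + hA. -/

import Mathlib

open Pointwise BigOperators

/-- The `h`-fold iterated sumset `hA = A + ⋯ + A` (`h` times), with `0A = {0}`. -/
def hfold {G : Type*} [AddCommMonoid G] : ℕ → Set G → Set G
  | 0, _ => {0}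
  | n + 1, A => A + hfold n A

/-- The chromatic sumset `h·𝒜 = h₁A₁ + ⋯ + h_qA_q`. -/
def chromSum {G : Type*} [AddCommMonoid G] {q : ℕ} (h : Fin q → ℕ) (A : Fin q → Set G) :
    Set G :=
  ∑ i, hfold (h i) (A i)

/-- `A` is an asymptotic `(r,ℓ)`-approximate group: there is `h₀` such that for all
`h ≥ h₀` there is `X_h ⊆ G` with `|X_h| ≤ ℓ` and `r(hA) ⊆ X_h + hA`. -/
def IsAAG {G : Type*} [AddCommGroup G] (A : Set G) (r ℓ : ℕ) : Prop :=
  ∃ h₀ : ℕ, ∀ h : ℕ, h₀ ≤ h →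
    ∃ X : Finset G, X.card ≤ ℓ ∧ hfold r (hfold h A) ⊆ ↑X + hfold h A

/-- An unbounded linear set `P(a; b₁,…,b_d) = {a + n₁b₁ + ⋯ + n_d b_d : nⱼ ∈ ℕ₀}`. -/
def IsUnboundedLinear {G : Type*} [AddCommMonoid G] (S : Set G) : Prop :=
  ∃ (d : ℕ) (a : G) (b : Fin d → G),
    S = {x | ∃ n : Fin d → ℕ, x = a + ∑ j, n j • b j}

/-!
A point of `rh • A` is a sum in which the translate `a i + Γ i` occurs `g i` times, where the `g i`
have total `rh`. Since `Γ i + Γ i = Γ i`, the `i`-th part of such sums is covered by that for any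
other multiplicity `e i`, translated by `(g i - e i) • a i`, provided that `e i` does not vanish
unless `g i` does. It thus suffices to bring the total down to `h` by subtracting one of a few
integer vectors.

Put `q = k - 1` and let `t` be the largest step with `q * t < h`. Greedily subtract `t` from
coordinates `1, …, q` as long as some entry exceeds `t`, but at most `rq` times, and correct
coordinate `0` so that the total becomes `h`. If no entry exceeds `t` any more, then these
coordinates add up to less than `h`, so coordinate `0` ends up positive. Otherwise `rq` steps were
made, which remove at least `(r - 1)h` when `rq ≤ h`, so coordinate `0` does not decrease. The
vector subtracted is determined by `q` natural numbers of sum at most `rq`, and there are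
`C((r + 1)q, q)` choices of these.
-/

lemma hfold_eq_nsmul {G : Type*} [AddCommMonoid G] (n : ℕ) (A : Set G) :
    hfold n A = n • A := by
  induction n with
  | zero => rw [hfold, zero_nsmul, Set.singleton_zero]
  | succ n ih => rw [hfold, ih, succ_nsmul']

lemma IsUnboundedLinear.exists_eq_vadd {G : Type*} [AddCommMonoid G] {S : Set G}
    (hS : IsUnboundedLinear S) :
    ∃ (a : G) (Γ : AddSubmonoid G), S = a +ᵥ (Γ : Set G) := by
  obtain ⟨d, a, b, rfl⟩ := hS
  refine ⟨a, AddSubmonoid.closure (Set.range b), Set.ext fun x => ?_⟩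
  simp [Set.mem_vadd_set, AddSubmonoid.mem_closure_range_iff_of_fintype, eq_comm]

section Sumsets

variable {ι G : Type*} [Fintype ι]

lemma sum_nsmul_subset_nsmul_iUnion [AddCommMonoid G] (P : ι → Set G) (g : ι → ℕ) :
    ∑ i, g i • P i ⊆ (∑ i, g i) • ⋃ i, P i := by
  rw [← Finset.sum_nsmul_assoc]
  exact Set.finsetSum_subset_finsetSum _ _ _ fun i _ =>
    Set.nsmul_subset_nsmul_left (Set.subset_iUnion P i)

lemma exists_mem_sum_nsmul_of_mem_nsmul_iUnion [AddCommMonoid G] {P : ι → Set G} {n : ℕ}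
    {x : G} (hx : x ∈ n • ⋃ i, P i) : ∃ g : ι → ℕ, ∑ i, g i = n ∧ x ∈ ∑ i, g i • P i := by
  classical
  induction n generalizing x with
  | zero => exact ⟨0, by simpa using hx⟩
  | succ n ih =>
    rw [succ_nsmul] at hx
    obtain ⟨y, hy, z, hz, rfl⟩ := hx
    obtain ⟨g, hg, hyg⟩ := ih hy
    obtain ⟨i, hzi⟩ := Set.mem_iUnion.1 hz
    refine ⟨g + Pi.single i 1, by simp [Finset.sum_add_distrib, hg], ?_⟩
    have hsum : ∑ j, (g + Pi.single i 1 : ι → ℕ) j • P j = ∑ j, g j • P j + P i := by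
      simp [add_nsmul, Finset.sum_add_distrib, Pi.single_apply, ite_smul]
    rw [hsum]
    exact Set.add_mem_add hyg hzi

lemma nsmul_vadd_subset_singleton_add [AddCommGroup G] (a : G) (Γ : AddSubmonoid G) {m n : ℕ}
    {d : ℤ} (hmn : (m : ℤ) = d + n) (h0 : n = 0 → m = 0) :
    m • (a +ᵥ (Γ : Set G)) ⊆ {d • a} + n • (a +ᵥ (Γ : Set G)) := by
  have hΓ : m • (Γ : Set G) ⊆ n • (Γ : Set G) := by
    rcases eq_or_ne n 0 with rfl | hn
    · rw [h0 rfl]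
    rcases eq_or_ne m 0 with rfl | hm
    · simp [hn]
    · rw [coe_set_nsmul hm, coe_set_nsmul hn]
  have ha : m • a = d • a + n • a := by
    rw [← natCast_zsmul, hmn, add_zsmul, natCast_zsmul]
  have hsingleton (k : ℕ) : k • ({a} : Set G) = {k • a} :=
    (map_nsmul Set.singletonAddMonoidHom k a).symm
  rw [← Set.singleton_vadd, vadd_eq_add, nsmul_add, nsmul_add, ← add_assoc, hsingleton, hsingleton,
    Set.singleton_add_singleton, ← ha]
  exact Set.add_subset_add_left hΓ

lemma sum_nsmul_vadd_subset [AddCommGroup G] (a : ι → G) (Γ : ι → AddSubmonoid G) {g e : ι → ℕ}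
    {d : ι → ℤ} (hg : ∀ i, (g i : ℤ) = d i + e i) (he : ∀ i, e i = 0 → g i = 0) :
    ∑ i, g i • (a i +ᵥ (Γ i : Set G)) ⊆
      {∑ i, d i • a i} + (∑ i, e i) • ⋃ i, a i +ᵥ (Γ i : Set G) :=
  calc ∑ i, g i • (a i +ᵥ (Γ i : Set G))
      ⊆ ∑ i, ({d i • a i} + e i • (a i +ᵥ (Γ i : Set G))) :=
        Set.finsetSum_subset_finsetSum _ _ _ fun i _ =>
          nsmul_vadd_subset_singleton_add (a i) (Γ i) (hg i) (he i)
    _ = {∑ i, d i • a i} + ∑ i, e i • (a i +ᵥ (Γ i : Set G)) := by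
        rw [Finset.sum_add_distrib, Set.finsetSum_singleton]
    _ ⊆ _ := Set.add_subset_add_left (sum_nsmul_subset_nsmul_iUnion _ e)

end Sumsets

lemma card_piAntidiag_univ {ι : Type*} [Fintype ι] [DecidableEq ι] (n : ℕ) :
    ((Finset.univ : Finset ι).piAntidiag n).card = (Fintype.card ι + n - 1).choose n := by
  rw [← Finset.map_sym_eq_piAntidiag, Finset.card_map, Finset.sym_univ, Finset.card_univ,
    Sym.card_sym_eq_choose]

lemma exists_eq_mul_add_sum_le {ι : Type*} [Fintype ι] (t M : ℕ) (g : ι → ℕ) :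
    ∃ m e : ι → ℕ, (∀ i, g i = t * m i + e i) ∧ (∀ i, e i = 0 → g i = 0) ∧
      ∑ i, m i ≤ M ∧ ∀ i, t < e i → ∑ i, m i = M := by
  classical
  induction M with
  | zero => exact ⟨0, g, by simp⟩
  | succ M ih =>
    obtain ⟨m, e, hg, he, hmM, hm⟩ := ih
    by_cases hlarge : ∃ i, t < e i
    · obtain ⟨i, hi⟩ := hlarge
      have hsum : ∑ j, (m + Pi.single i 1 : ι → ℕ) j = M + 1 := by
        simp [Finset.sum_add_distrib, hm i hi]
      refine ⟨m + Pi.single i 1, Function.update e i (e i - t), fun j => ?_, fun j => ?_, hsum.le,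
        fun _ _ => hsum⟩
      · rcases eq_or_ne j i with rfl | hj
        · simp only [Pi.add_apply, Pi.single_eq_same, Function.update_self, hg j, mul_add]
          omega
        · simp [hj, hg j]
      · rcases eq_or_ne j i with rfl | hj
        · simp only [Function.update_self]
          omega
        · simpa [hj] using he j
    · exact ⟨m, e, hg, he, by omega, fun i hi => absurd ⟨i, hi⟩ hlarge⟩

/-- The integer vector of total `s` whose coordinates away from `0` are `t * m i`; such vectors give
the coefficients of the translates in the covering. The value `m 0` has no effect: it is a slack
variable, turning an upper bound on the sum of the other `m i` into the prescribed total of all. -/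
def balancedShift {q : ℕ} (s : ℤ) (t : ℕ) (m : Fin (q + 1) → ℕ) : Fin (q + 1) → ℤ :=
  Fin.cons (s - ∑ i : Fin q, (t * m i.succ : ℤ)) fun i => t * m i.succ

lemma exists_eq_balancedShift_add {q t M N h : ℕ} (ht : q * t < h)
    (hM : 0 < q → N ≤ h + t * M) {g : Fin (q + 1) → ℕ} (hg : ∑ i, g i = N) :
    ∃ m ∈ Finset.univ.piAntidiag M, ∃ e : Fin (q + 1) → ℕ, ∑ i, e i = h ∧
      (∀ i, (g i : ℤ) = balancedShift (N - h) t m i + e i) ∧ ∀ i, e i = 0 → g i = 0 := by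
  obtain ⟨m, e, hgm, he, hmM, hfull⟩ := exists_eq_mul_add_sum_le t M fun i : Fin q => g i.succ
  have hsum : g 0 + (t * ∑ i, m i + ∑ i, e i) = N := by
    rw [← hg, Fin.sum_univ_succ, Finset.mul_sum, ← Finset.sum_add_distrib]
    simp only [hgm]
  have hroom : ∑ i, e i < h ∨ g 0 + ∑ i, e i ≤ h := by
    by_cases hlarge : ∃ i, t < e i
    · obtain ⟨i, hi⟩ := hlarge
      have hN := hM i.pos
      rw [hfull i hi] at hsum
      omega
    · push Not at hlarge
      have hle : ∑ i, e i ≤ q * t := by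
        simpa using Finset.sum_le_card_nsmul Finset.univ e t fun i _ => hlarge i
      omega
  refine ⟨Fin.cons (M - ∑ i, m i) m, ?_, Fin.cons (h - ∑ i, e i) e, ?_, Fin.cases ?_ ?_,
    Fin.cases ?_ ?_⟩
  · simp [Fin.sum_univ_succ, hmM]
  · rw [Fin.sum_univ_succ]
    simp only [Fin.cons_zero, Fin.cons_succ]
    omega
  · simp only [balancedShift, Fin.cons_zero, Fin.cons_succ, ← Finset.mul_sum]
    zify [show ∑ i, e i ≤ h by omega] at hsum ⊢
    linarith
  · simp [balancedShift, hgm]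
  · simp only [Fin.cons_zero]
    omega
  · simpa using he

lemma mul_le_add_pred_div_mul {q r h : ℕ} (hq : 0 < q) (hr : r * q ≤ h) :
    r * h ≤ h + (h - 1) / q * (r * q) :=
  have hh : h ≤ (h - 1) / q * q + q := by
    have hlt := Nat.lt_div_mul_add (a := h - 1) hq
    omega
  calc r * h ≤ r * ((h - 1) / q * q + q) := Nat.mul_le_mul_left r hh
    _ = r * q + (h - 1) / q * (r * q) := by ring
    _ ≤ h + (h - 1) / q * (r * q) := Nat.add_le_add_right hr _

theorem stmt12_general {G : Type*} [AddCommGroup G] {k : ℕ} (hk : 0 < k) (a : Fin k → G)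
    (Γ : Fin k → AddSubmonoid G) {A : Set G} (hA : A = ⋃ i, a i +ᵥ (Γ i : Set G)) {r h : ℕ}
    (hh : 0 < h) (hr : r * (k - 1) ≤ h) :
    ∃ X : Finset G, X.card ≤ ((r + 1) * (k - 1)).choose (k - 1) ∧
      hfold r (hfold h A) ⊆ ↑X + hfold h A := by
  classical
  obtain ⟨q, rfl⟩ : ∃ q, k = q + 1 := ⟨k - 1, by omega⟩
  rw [Nat.add_sub_cancel] at hr ⊢
  -- For `q = 0` the step `(h - 1) / q` is the junk value `0`; no coordinate is then reduced by it.
  have ht : q * ((h - 1) / q) < h := (Nat.mul_div_le _ _).trans_lt (by omega)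
  let translate (m : Fin (q + 1) → ℕ) : G :=
    ∑ i, balancedShift ((r * h : ℕ) - h) ((h - 1) / q) m i • a i
  refine ⟨(Finset.univ.piAntidiag (r * q)).image translate, ?_, fun x hx => ?_⟩
  · have hcard : Fintype.card (Fin (q + 1)) + r * q - 1 = (r + 1) * q := by
      rw [Fintype.card_fin, add_mul]
      omega
    have hsymm : ((r + 1) * q).choose (r * q) = ((r + 1) * q).choose q :=
      Nat.choose_symm_of_eq_add (by ring)
    exact Finset.card_image_le.trans (by rw [card_piAntidiag_univ, hcard, hsymm])
  · simp only [hfold_eq_nsmul, ← mul_nsmul', hA] at hx ⊢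
    obtain ⟨g, hg, hxg⟩ := exists_mem_sum_nsmul_of_mem_nsmul_iUnion hx
    obtain ⟨m, hm, e, rfl, hgm, he⟩ :=
      exists_eq_balancedShift_add ht (mul_le_add_pred_div_mul · hr) hg
    have htranslate := Finset.mem_coe.2 (Finset.mem_image_of_mem translate hm)
    exact Set.add_subset_add_right (Set.singleton_subset_iff.2 htranslate)
      (sum_nsmul_vadd_subset a Γ hgm he hxg)

/-- One-color theorem for unions of unbounded linear sets: if `A` is a union of `k`
unbounded linear sets, then `A` is an asymptotic `(r, C((r+1)(k−1), k−1))`-approximate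
group; moreover the covering holds for every `h ≥ r(k−1)² + k`. -/
theorem stmt12 {G : Type*} [AddCommGroup G] (A : Set G) (k : ℕ) (hk : 0 < k)
    (P : Fin k → Set G) (hP : ∀ i, IsUnboundedLinear (P i)) (hA : A = ⋃ i, P i)
    (r : ℕ) (hr : 0 < r) :
    IsAAG A r (((r + 1) * (k - 1)).choose (k - 1)) ∧
    ∀ h : ℕ, r * (k - 1) ^ 2 + k ≤ h →
      ∃ X : Finset G, X.card ≤ ((r + 1) * (k - 1)).choose (k - 1) ∧
        hfold r (hfold h A) ⊆ ↑X + hfold h A := by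
  choose a Γ hΓ using fun i => (hP i).exists_eq_vadd
  have cover : ∀ h, r * (k - 1) ^ 2 + k ≤ h → _ := fun h hh =>
    stmt12_general (h := h) (r := r) hk a Γ (hA.trans (Set.iUnion_congr hΓ)) (by omega)
      ((Nat.mul_le_mul_left r (Nat.le_self_pow two_ne_zero _)).trans (by omega))
  exact ⟨⟨_, cover⟩, cover⟩
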